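/- Both [Inf G SMon Bc] and [Inf G SMon^d Bc] are proper subsets of [Inf G Mon^& Bc]; in particular, every strongly monotone and every dual strongly monotone behaviorally correct learner on informants for a learned language automatically satisfies both Mon and Mon^d. -/

import Mathlib

open Filter Classical

namespace InfBc

/-! ### Basic notions: r.e. sets, informants, learners -/

/-- The `e`-th recursively enumerable set (via an acceptable numbering of
partial computable functions, `W e = dom φ_e`). -/
def W (e : ℕ) : Set ℕ := {x | ((Denumerable.ofNat Nat.Partrec.Code e).eval x).Dom}

/-- A language is recursively enumerable. -/
def RE (L : Set ℕ) : Prop := ∃ e, W e = L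

abbrev Datum := ℕ × Bool
abbrev Seq := List Datum
abbrev Informant := ℕ → Datum
abbrev HypSeq := ℕ → Part ℕ
/-- Learners are partial functions; all input types are coded into `ℕ`. -/
abbrev Learner := ℕ →. ℕ
abbrev Restriction := HypSeq → Informant → Prop

/-- Positive information of an infinite sequence. -/
def posI (I : Informant) : Set ℕ := {x | ∃ n, I n = (x, true)}
/-- Negative information of an infinite sequence. -/
def negI (I : Informant) : Set ℕ := {x | ∃ n, I n = (x, false)}

/-- `I` is an informant for the language `L`. -/
def IsInformant (I : Informant) (L : Set ℕ) : Prop := posI I = L ∧ negI I = Lᶜ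

/-- `I` is an informant (for some language), i.e. `I ∈ Inf`. -/
def IsInf (I : Informant) : Prop := IsInformant I (posI I)

/-- `I` is a canonical informant. -/
def Canonical (I : Informant) : Prop := ∀ x, I x = (x, true) ∨ I x = (x, false)

/-- `I[n]`, the length-`n` initial segment of `I`. -/
def segment (I : Informant) (n : ℕ) : Seq := (List.range n).map I

/-- Positive information of a finite sequence. -/
def posS (σ : Seq) : Set ℕ := {x | (x, true) ∈ σ}
/-- Negative information of a finite sequence. -/
def negS (σ : Seq) : Set ℕ := {x | (x, false) ∈ σ}
/-- The content of a finite sequence, as a set. -/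
def contentS (σ : Seq) : Set Datum := {a | a ∈ σ}

/-! ### Interaction operators -/

abbrev InteractionOperator := Learner → Informant → HypSeq

/-- Full-information (Gold-style) interaction: `G(h,I)(i) = h(I[i])`. -/
def Gop : InteractionOperator := fun h I i => h (Encodable.encode (segment I i))

/-- Set-driven interaction: `Sd(h,I)(i) = h(content(I[i]))`. -/
def Sdop : InteractionOperator := fun h I i => h (Encodable.encode (segment I i).toFinset)

/-- The iterated evaluation of an iterative learner on a finite sequence:
start with the initial hypothesis `h(none)` and feed the data one by one. -/
def iterExtend (h : Learner) (σ : Seq) : Part ℕ :=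
  σ.foldl (fun pe a => pe.bind fun e => h (Encodable.encode (some (e, a))))
    (h (Encodable.encode (none : Option (ℕ × Datum))))

/-- Iterative interaction: `It(h,I)(i)` is obtained by feeding `I[i]` one datum
at a time, each time updating the previous hypothesis. -/
def Itop : InteractionOperator := fun h I i => iterExtend h (segment I i)

/-- An iterative learner is confluent if the order and multiplicity in which
the content is presented does not matter. -/
def ConfluentLearner (h : Learner) : Prop :=
  ∀ σ τ : Seq, contentS σ = contentS τ → iterExtend h σ = iterExtend h τ

/-- Confluently iterative interaction. -/
noncomputable def CflItop : InteractionOperator := fun h I i =>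
  if ConfluentLearner h then iterExtend h (segment I i) else Part.none

/-- `β ≼ β'`: every (partial computable) `β`-learner can be translated into a
`β'`-learner with the same hypothesis sequence on every informant. -/
def OpLe (β β' : InteractionOperator) : Prop :=
  ∀ h : Learner, Partrec h → ∃ h' : Learner, Partrec h' ∧
    ∀ I : Informant, IsInf I → ∀ n, β h I n = β' h' I n

/-! ### Learning restrictions -/

/-- The trivial restriction `T`. -/
def TT : Restriction := fun _ _ => True

/-- Explanatory identification. -/
def Ex : Restriction := fun p I =>
  ∃ q, W q = posI I ∧ ∀ᶠ n in atTop, p n = Part.some q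

/-- Behaviorally correct identification. -/
def Bc : Restriction := fun p I => ∀ᶠ n in atTop, ∃ e ∈ p n, W e = posI I

/-- Consistency of a hypothesis with a finite sequence of data. -/
def ConsH (e : ℕ) (σ : Seq) : Prop := posS σ ⊆ W e ∧ negS σ ∩ W e = ∅

/-- Consistency of a hypothesis sequence with an informant. -/
def Cons : Restriction := fun p I => ∀ n, ∃ e ∈ p n, ConsH e (segment I n)

/-- Strongly monotone. -/
def SMon : Restriction := fun p _ =>
  ∀ s t, s ≤ t → ∀ e ∈ p s, ∀ e' ∈ p t, W e ⊆ W e'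

/-- Dual strongly monotone. -/
def SMond : Restriction := fun p _ =>
  ∀ s t, s ≤ t → ∀ e ∈ p s, ∀ e' ∈ p t, W e' ⊆ W e

/-- Monotone. -/
def Mon : Restriction := fun p I =>
  ∀ s t, s ≤ t → ∀ e ∈ p s, ∀ e' ∈ p t, W e ∩ posI I ⊆ W e' ∩ posI I

/-- Dual monotone. -/
def Mond : Restriction := fun p I =>
  ∀ s t, s ≤ t → ∀ e ∈ p s, ∀ e' ∈ p t, (W e)ᶜ ∩ negI I ⊆ (W e')ᶜ ∩ negI I

/-- Weakly monotone. -/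
def WMon : Restriction := fun p I =>
  ∀ s t, s ≤ t → ∀ e ∈ p s, ConsH e (segment I t) → ∀ e' ∈ p t, W e ⊆ W e'

/-- Dual weakly monotone. -/
def WMond : Restriction := fun p I =>
  ∀ s t, s ≤ t → ∀ e ∈ p s, ConsH e (segment I t) → ∀ e' ∈ p t, W e' ⊆ W e

/-- Cautious. -/
def Caut : Restriction := fun p _ =>
  ∀ s t, s < t → ∀ e ∈ p s, ∀ e' ∈ p t, ¬ W e' ⊂ W e

/-- Target cautious. -/
def CautTar : Restriction := fun p I =>
  ∀ s, ∀ e ∈ p s, ¬ posI I ⊂ W e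

/-- Finitely cautious. -/
def CautFin : Restriction := fun p _ =>
  ∀ s t, s < t → ∀ e ∈ p s, ∀ e' ∈ p t, W e' ⊂ W e → (W e').Infinite

/-- Infinitely cautious. -/
def CautInf : Restriction := fun p _ =>
  ∀ s t, s < t → ∀ e ∈ p s, ∀ e' ∈ p t, W e' ⊂ W e → (W e').Finite

/-! ### Learnability -/

/-- The class of admissible learners: all partial computable learners. -/
def AllL : Learner → Prop := fun _ => True
/-- The class of admissible learners: total computable learners (`ℛ`). -/
def TotalL : Learner → Prop := fun h => ∀ x, (h x).Dom
/-- Admissible informants: all informants (`Inf`). -/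
def AllI : Informant → Prop := fun _ => True

/-- `h` learns `L` in the setting given by admissible informants `P`,
interaction operator `β` and local restriction `δ`. -/
def LearnsWith (P : Informant → Prop) (β : InteractionOperator) (δ : Restriction)
    (h : Learner) (L : Set ℕ) : Prop :=
  RE L ∧ ∀ I : Informant, P I → IsInformant I L → δ (β h I) I

/-- `[τ(α) C P β δ]`: the collection of all classes of languages learnable by
some learner in `C` that satisfies the global restriction `α` on all admissible
informants, under interaction operator `β` and local restriction `δ`. -/
def Learnable (α : Restriction) (C : Learner → Prop) (P : Informant → Prop)
    (β : InteractionOperator) (δ : Restriction) : Set (Set (Set ℕ)) :=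
  {𝓛 | ∃ h : Learner, Partrec h ∧ C h ∧
        (∀ I : Informant, IsInf I → P I → α (β h I) I) ∧
        ∀ L ∈ 𝓛, LearnsWith P β δ h L}

/-! ### Properties of restrictions -/

/-- A learning restriction is delayable if it is preserved under postponing
hypotheses along a non-decreasing unbounded function. -/
def Delayable (δ : Restriction) : Prop :=
  ∀ I I' : Informant, IsInf I → IsInf I' → Set.range I = Set.range I' →
    ∀ (p : HypSeq) (s : ℕ → ℕ), Monotone s → (∀ m, ∃ n, m ≤ s n) →
      δ p I → (∀ n, contentS (segment I (s n)) ⊆ contentS (segment I' n)) →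
      δ (fun n => p (s n)) I'

/-- A learning restriction is semantic if it is indifferent to replacing the
hypothesis sequence by a semantically equivalent one. -/
def Semantic (δ : Restriction) : Prop :=
  ∀ (p p' : HypSeq) (I : Informant), δ p I →
    (∀ i, (p i).Dom ↔ (p' i).Dom) →
    (∀ i, ∀ e ∈ p i, ∀ e' ∈ p' i, W e = W e') →
    δ p' I


/-- Canonical informant of a set. -/
noncomputable def canI (L : Set ℕ) : Informant := fun n => (n, decide (n ∈ L))

lemma canI_isInformant (L : Set ℕ) : IsInformant (canI L) L := by
  constructor
  · ext x
    simp [posI, canI]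
  · ext x
    simp [negI, canI]

lemma smon_imp (p : HypSeq) (I : Informant) (hI : IsInf I) (hS : SMon p I) (hB : Bc p I) :
    Mon p I ∧ Mond p I := by
  refine ⟨fun s t hst e he e' he' x hx => ⟨hS s t hst e he e' he' hx.1, hx.2⟩, ?_⟩
  intro s t hst e he e' he' x hx
  refine ⟨fun hx' => ?_, hx.2⟩
  obtain ⟨N, hN⟩ := eventually_atTop.1 hB
  obtain ⟨q, hq, hW⟩ := hN (max N t) (le_max_left _ _)
  have h1 := hS t (max N t) (le_max_right _ _) e' he' q hq hx'
  rw [hW] at h1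
  have h2 := hx.2
  rw [hI.2] at h2
  exact h2 h1

lemma smond_imp (p : HypSeq) (I : Informant) (hS : SMond p I) (hB : Bc p I) :
    Mon p I ∧ Mond p I := by
  refine ⟨?_, fun s t hst e he e' he' x hx => ⟨fun h => hx.1 (hS s t hst e he e' he' h), hx.2⟩⟩
  intro s t hst e he e' he' x hx
  refine ⟨?_, hx.2⟩
  obtain ⟨N, hN⟩ := eventually_atTop.1 hB
  obtain ⟨q, hq, hW⟩ := hN (max N t) (le_max_left _ _)
  have h1 := hS t (max N t) (le_max_right _ _) e' he' q hq
  rw [hW] at h1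
  exact h1 hx.2

lemma isInf_of {I : Informant} {L : Set ℕ} (h : IsInformant I L) : IsInf I := by
  obtain ⟨rfl, h2⟩ := h
  exact ⟨rfl, h2⟩

lemma smn (b : ℕ → ℕ → Bool) (hb : Computable (fun q : ℕ × ℕ => b q.1 q.2)) :
    ∃ g : ℕ → ℕ, Computable g ∧ ∀ n, W (g n) = {x | b n x = true} := by
  have hb' : Computable (fun m : ℕ => b m.unpair.1 m.unpair.2) :=
    hb.comp Computable.unpair
  have hf : Partrec (fun m : ℕ => bif b m.unpair.1 m.unpair.2 then Part.some 0
      else (Part.none : Part ℕ)) :=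
    Partrec.cond hb' (Computable.const 0).partrec Partrec.none
  obtain ⟨c, hc⟩ := Nat.Partrec.Code.exists_code.1 (Partrec.nat_iff.1 hf)
  refine ⟨fun n => Encodable.encode (c.curry n), ?_, ?_⟩
  · exact Computable.encode.comp
      (Nat.Partrec.Code.primrec₂_curry.to_comp.comp (Computable.const c) Computable.id)
  · intro n
    ext x
    simp only [W, Set.mem_ofPred_eq, Denumerable.ofNat_encode, Nat.Partrec.Code.eval_curry, hc,
      Nat.unpair_pair]
    cases b n x <;> simp

/-- Computable membership test in a coded sequence. -/
def memb (v : Bool) (n x : ℕ) : Bool :=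
  match Encodable.decode (α := Seq) n with
  | none => false
  | some l => Nat.blt (@List.idxOf Datum instBEqOfDecidableEq (x, v) l) l.length

lemma memb_encode (v : Bool) (l : Seq) (x : ℕ) :
    memb v (Encodable.encode l) x = true ↔ (x, v) ∈ l := by
  simp [memb, List.idxOf_lt_length_iff]

lemma memb_computable (v : Bool) : Computable (fun q : ℕ × ℕ => memb v q.1 q.2) := by
  have h1 : Primrec (fun q : ℕ × ℕ => (Encodable.decode (α := Seq) q.1)) :=
    Primrec.decode.comp Primrec.fst
  have h2 : Primrec₂ (fun (q : ℕ × ℕ) (l : Seq) => Nat.blt (@List.idxOf Datum instBEqOfDecidableEq (q.2, v) l) l.length) := by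
    have hlt : PrimrecPred (fun r : (ℕ × ℕ) × Seq => @List.idxOf Datum instBEqOfDecidableEq (r.1.2, v) r.2 < r.2.length) :=
      Primrec.nat_lt.comp
        (Primrec.list_idxOf.comp
          (Primrec.pair (Primrec.snd.comp Primrec.fst) (Primrec.const v)) Primrec.snd)
        (Primrec.list_length.comp Primrec.snd)
    refine hlt.decide.of_eq fun r => ?_
    rw [Bool.eq_iff_iff]
    simp
  refine (Primrec.option_casesOn h1 (Primrec.const false) h2).to_comp.of_eq fun q => ?_
  unfold memb
  cases (Encodable.decode (α := Seq) q.1) <;> rfl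

lemma mem_segment (I : Informant) (n : ℕ) (a : Datum) :
    a ∈ segment I n ↔ ∃ i < n, I i = a := by
  simp [segment]

lemma segment_congr {I J : Informant} {n : ℕ} (h : ∀ i < n, I i = J i) :
    segment I n = segment J n := by
  unfold segment
  exact List.map_congr_left fun i hi => h i (List.mem_range.1 hi)

/-- The empty set and all singletons. -/
def clA : Set (Set ℕ) := {L | L.Subsingleton}
/-- Complements of members of `clA`. -/
def clB : Set (Set ℕ) := {L | Lᶜ.Subsingleton}

lemma sub_ev {I : Informant} {v : Bool} {S : Set ℕ} (hS : S.Subsingleton)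
    (h : S = {x | ∃ n, I n = (x, v)}) :
    ∀ᶠ n in atTop, ∀ x, (x, v) ∈ segment I n ↔ x ∈ S := by
  have key : ∀ n x, (x, v) ∈ segment I n → x ∈ S := by
    intro n x hx
    obtain ⟨i, -, hi⟩ := (mem_segment _ _ _).1 hx
    rw [h]
    exact ⟨i, hi⟩
  rcases S.eq_empty_or_nonempty with h0 | ⟨y, hy⟩
  · refine Eventually.of_forall fun n x => ⟨key n x, fun hx => ?_⟩
    simp [h0] at hx
  · have hy' := hy
    rw [h] at hy'
    obtain ⟨i, hi⟩ := hy'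
    filter_upwards [eventually_gt_atTop i] with n hn x
    refine ⟨key n x, fun hx => ?_⟩
    rw [hS hx hy]
    exact (mem_segment _ _ _).2 ⟨i, hn, hi⟩

lemma clA_mem : clA ∈ Learnable TT AllL AllI Gop (fun p I => SMon p I ∧ Bc p I) := by
  obtain ⟨g, hg, hW⟩ := smn _ (memb_computable true)
  have hWl : ∀ l : Seq, W (g (Encodable.encode l)) = {x | (x, true) ∈ l} := by
    intro l
    rw [hW]
    ext x
    exact memb_encode true l x
  refine ⟨fun n => Part.some (g n), hg.partrec, trivial, fun _ _ _ => trivial, ?_⟩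
  have main : ∀ L ∈ clA, ∀ I : Informant, IsInformant I L →
      (SMon (Gop (fun n => Part.some (g n)) I) I ∧ Bc (Gop (fun n => Part.some (g n)) I) I) := by
    intro L hL I hI
    constructor
    · intro s t hst e he e' he' x hx
      simp only [Gop, Part.mem_some_iff] at he he'
      subst he he'
      rw [hWl] at hx ⊢
      obtain ⟨i, hi, h⟩ := (mem_segment _ _ _).1 hx
      exact (mem_segment _ _ _).2 ⟨i, hi.trans_le hst, h⟩
    · filter_upwards [sub_ev (I := I) (v := true) hL hI.1.symm] with n hn
      refine ⟨_, Part.mem_some _, ?_⟩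
      rw [hWl, hI.1]
      ext x
      exact hn x
  intro L hL
  refine ⟨?_, fun I _ hI => main L hL I hI⟩
  obtain ⟨n, e, _, he⟩ := (main L hL _ (canI_isInformant L)).2.exists
  exact ⟨e, he.trans (canI_isInformant L).1⟩

lemma clB_mem : clB ∈ Learnable TT AllL AllI Gop (fun p I => SMond p I ∧ Bc p I) := by
  obtain ⟨g, hg, hW⟩ := smn (fun n x => !(memb false n x))
    (Primrec.not.to_comp.comp (memb_computable false))
  have hWl : ∀ l : Seq, W (g (Encodable.encode l)) = {x | (x, false) ∉ l} := by
    intro l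
    rw [hW]
    ext x
    simp [← memb_encode false l x]
  refine ⟨fun n => Part.some (g n), hg.partrec, trivial, fun _ _ _ => trivial, ?_⟩
  have main : ∀ L ∈ clB, ∀ I : Informant, IsInformant I L →
      (SMond (Gop (fun n => Part.some (g n)) I) I ∧ Bc (Gop (fun n => Part.some (g n)) I) I) := by
    intro L hL I hI
    constructor
    · intro s t hst e he e' he' x hx
      simp only [Gop, Part.mem_some_iff] at he he'
      subst he he'
      rw [hWl] at hx ⊢
      intro hx'
      obtain ⟨i, hi, h⟩ := (mem_segment _ _ _).1 hx'
      exact hx ((mem_segment _ _ _).2 ⟨i, hi.trans_le hst, h⟩)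
    · filter_upwards [sub_ev (I := I) (v := false) hL hI.2.symm] with n hn
      refine ⟨_, Part.mem_some _, ?_⟩
      rw [hWl, hI.1]
      ext x
      simp only [Set.mem_ofPred_eq, hn x, Set.mem_compl_iff, not_not]
  intro L hL
  refine ⟨?_, fun I _ hI => main L hL I hI⟩
  obtain ⟨n, e, _, he⟩ := (main L hL _ (canI_isInformant L)).2.exists
  exact ⟨e, he.trans (canI_isInformant L).1⟩

/-- If `h` learns `L` and all sets `M n`, and `M n` agrees with `L` below `n`, then some two
hypotheses for `L` and `M n` occur in this order along the informant of `M n`. -/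
lemma lock {h : Learner} {L : Set ℕ} {M : ℕ → Set ℕ}
    (hLM : ∀ n, ∀ i < n, i ∈ L ↔ i ∈ M n)
    (hL : Bc (Gop h (canI L)) (canI L)) (hM : ∀ n, Bc (Gop h (canI (M n))) (canI (M n))) :
    ∃ n t, n ≤ t ∧ ∃ e ∈ Gop h (canI (M n)) n, ∃ e' ∈ Gop h (canI (M n)) t,
      W e = L ∧ W e' = M n := by
  obtain ⟨n, e, he, hWe⟩ := hL.exists
  obtain ⟨N, hN⟩ := eventually_atTop.1 (hM n)
  obtain ⟨e', he', hWe'⟩ := hN (max N n) (le_max_left _ _)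
  refine ⟨n, max N n, le_max_right _ _, e, ?_, e', he', hWe.trans (canI_isInformant L).1,
    hWe'.trans (canI_isInformant _).1⟩
  have : segment (canI (M n)) n = segment (canI L) n :=
    segment_congr fun i hi => by simp [canI, hLM n i hi]
  simpa only [Gop, this] using he

lemma clB_not : clB ∉ Learnable TT AllL AllI Gop (fun p I => SMon p I ∧ Bc p I) := by
  rintro ⟨h, -, -, -, hh⟩
  have hM : ∀ n : ℕ, ({n}ᶜ : Set ℕ) ∈ clB := fun n => by simp [clB]
  have hU : (Set.univ : Set ℕ) ∈ clB := by simp [clB]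
  obtain ⟨n, t, hnt, e, he, e', he', h1, h2⟩ :=
    lock (h := h) (L := Set.univ) (M := fun n => {n}ᶜ)
      (fun n i hi => by simp [hi.ne])
      ((hh _ hU).2 _ trivial (canI_isInformant _)).2
      (fun n => ((hh _ (hM n)).2 _ trivial (canI_isInformant _)).2)
  have := ((hh _ (hM n)).2 _ trivial (canI_isInformant _)).1 n t hnt e he e' he'
  rw [h1, h2] at this
  exact this (Set.mem_univ n) rfl

lemma clA_not : clA ∉ Learnable TT AllL AllI Gop (fun p I => SMond p I ∧ Bc p I) := by
  rintro ⟨h, -, -, -, hh⟩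
  have hM : ∀ n : ℕ, ({n} : Set ℕ) ∈ clA := fun n => by simp [clA]
  have hU : (∅ : Set ℕ) ∈ clA := by simp [clA]
  obtain ⟨n, t, hnt, e, he, e', he', h1, h2⟩ :=
    lock (h := h) (L := ∅) (M := fun n => {n})
      (fun n i hi => by simp [hi.ne])
      ((hh _ hU).2 _ trivial (canI_isInformant _)).2
      (fun n => ((hh _ (hM n)).2 _ trivial (canI_isInformant _)).2)
  have := ((hh _ (hM n)).2 _ trivial (canI_isInformant _)).1 n t hnt e he e' he'
  rw [h1, h2] at this
  exact this (Set.mem_singleton n)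

lemma learnable_mono {δ δ' : Restriction} (h : ∀ p I, IsInf I → δ p I → δ' p I) :
    Learnable TT AllL AllI Gop δ ⊆ Learnable TT AllL AllI Gop δ' := by
  rintro 𝓛 ⟨g, h1, h2, h3, h4⟩
  exact ⟨g, h1, h2, h3, fun L hL => ⟨(h4 L hL).1, fun I hP hI =>
    h _ _ (isInf_of hI) ((h4 L hL).2 I hP hI)⟩⟩

/-- Both `[Inf G SMon Bc]` and `[Inf G SMon^d Bc]` are proper
subsets of `[Inf G Mon^& Bc]`; in particular, on any informant, strongly
monotone (or dual strongly monotone) behaviorally correct hypothesis sequences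
automatically satisfy both `Mon` and `Mon^d`. -/
theorem smon_variants_proper_subsets_of_combined_mon :
    (∀ (p : HypSeq) (I : Informant), IsInf I → SMon p I → Bc p I →
      Mon p I ∧ Mond p I) ∧
    (∀ (p : HypSeq) (I : Informant), IsInf I → SMond p I → Bc p I →
      Mon p I ∧ Mond p I) ∧
    Learnable TT AllL AllI Gop (fun p I => SMon p I ∧ Bc p I) ⊂
      Learnable TT AllL AllI Gop (fun p I => (Mon p I ∧ Mond p I) ∧ Bc p I) ∧
    Learnable TT AllL AllI Gop (fun p I => SMond p I ∧ Bc p I) ⊂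
      Learnable TT AllL AllI Gop (fun p I => (Mon p I ∧ Mond p I) ∧ Bc p I) := by
  have s1 : Learnable TT AllL AllI Gop (fun p I => SMon p I ∧ Bc p I) ⊆
      Learnable TT AllL AllI Gop (fun p I => (Mon p I ∧ Mond p I) ∧ Bc p I) :=
    learnable_mono fun p I hI h => ⟨smon_imp p I hI h.1 h.2, h.2⟩
  have s2 : Learnable TT AllL AllI Gop (fun p I => SMond p I ∧ Bc p I) ⊆
      Learnable TT AllL AllI Gop (fun p I => (Mon p I ∧ Mond p I) ∧ Bc p I) :=
    learnable_mono fun p I _ h => ⟨smond_imp p I h.1 h.2, h.2⟩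
  exact ⟨smon_imp, fun p I _ => smond_imp p I,
    ⟨s1, fun h => clB_not (h (s2 clB_mem))⟩, ⟨s2, fun h => clA_not (h (s1 clA_mem))⟩⟩

end InfBc
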